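/- Let A be a bounded invertible Mealy automaton over X with A = C(A). Then for every finite word v, the orbit O(v) equals the union of the e-orbit O^e(v) together with the e-orbits O^e(u) over all post-critical words u ∈ O(v). -/

import Mathlib

/-- A Mealy automaton over alphabet `X` with state set `S`:
the transition-output function sends `(s, x)` to `(output letter, next state)`. -/
structure Mealy (S X : Type*) where
  step : S → X → X × S

namespace Mealy

variable {S X : Type*}

/-- The section `s|_v`: the state reached after processing the word `v` from state `s`. -/
def sec (A : Mealy S X) (s : S) : List X → S
  | [] => s
  | x :: v => A.sec (A.step s x).2 v

/-- The action of a state on finite words (lists of letters, read left to right). -/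
def act (A : Mealy S X) (s : S) : List X → List X
  | [] => []
  | x :: v => (A.step s x).1 :: A.act (A.step s x).2 v

/-- A state is trivial if it acts on `X^*` as the identity. -/
def IsTrivialState (A : Mealy S X) (s : S) : Prop := ∀ v : List X, A.act s v = v

/-- An automaton is invertible if every state acts on the letters by a permutation. -/
def Invertible (A : Mealy S X) : Prop :=
  ∀ s : S, Function.Bijective fun x : X => (A.step s x).1

/-- The automaton group `G_A`: the subgroup of permutations of `X^*` generated by
the permutations defined by the states of `A`. -/
def autGroup (A : Mealy S X) : Subgroup (Equiv.Perm (List X)) :=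
  Subgroup.closure { f : Equiv.Perm (List X) | ∃ s : S, ∀ v : List X, f v = A.act s v }

/-- A left-infinite sequence `…x₂x₁` is encoded as `p : ℕ → X` with `p 0 = x₁`, `p 1 = x₂`, ….
It is post-critical if it is the sequence of input labels or of output labels of a
left-infinite directed path in `A` ending at a non-trivial state. -/
def IsPostCritical (A : Mealy S X) (p : ℕ → X) : Prop :=
  ∃ (σ : ℕ → S) (inp out : ℕ → X),
    (∀ n, A.step (σ (n + 1)) (inp n) = (out n, σ n)) ∧
      ¬A.IsTrivialState (σ 0) ∧ (p = inp ∨ p = out)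

/-- The post-critical set of `A`. -/
def PostCriticalSet (A : Mealy S X) : Set (ℕ → X) := { p | A.IsPostCritical p }

/-- An automaton is bounded if its post-critical set is finite. -/
def Bounded (A : Mealy S X) : Prop := A.PostCriticalSet.Finite

/-- The length-`n` suffix (as a finite word, read left to right) of a left-infinite
sequence `…x₂x₁` encoded as `p : ℕ → X`: the word `xₙ…x₂x₁`. -/
def lsuffix (p : ℕ → X) (n : ℕ) : List X := (List.range n).reverse.map p

/-- A finite word is post-critical if it is a suffix of some post-critical sequence. -/
def IsPostCriticalWord (A : Mealy S X) (v : List X) : Prop :=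
  ∃ p : ℕ → X, A.IsPostCritical p ∧ v = lsuffix p v.length

/-- The base relation for `e`-equivalence: `v ≈ u` if some state `s` satisfies
`s|_v` trivial and `s(v) = u`, or `s|_u` trivial and `s(u) = v`. -/
def ERel (A : Mealy S X) (v u : List X) : Prop :=
  ∃ s : S, (A.IsTrivialState (A.sec s v) ∧ A.act s v = u) ∨
    (A.IsTrivialState (A.sec s u) ∧ A.act s u = v)

/-- `e`-equivalence: the equivalence relation generated by `≈`. -/
def EEquiv (A : Mealy S X) : List X → List X → Prop := Relation.EqvGen A.ERel

/-- The `e`-orbit of a word. -/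
def eOrbit (A : Mealy S X) (v : List X) : Set (List X) := { u | A.EEquiv v u }

/-- The orbit of a finite word under the automaton group. -/
def orbit (A : Mealy S X) (v : List X) : Set (List X) := { u | ∃ g ∈ A.autGroup, g v = u }

/-- Reachability by a directed path in the automaton. -/
def Reaches (A : Mealy S X) : S → S → Prop :=
  Relation.ReflTransGen fun a b => ∃ x : X, (A.step a x).2 = b

/-- The states of the circuit part `C(A)`: states reachable by a directed path
from some directed cycle of `A`. -/
def circuitStates (A : Mealy S X) : Set S :=
  { s | ∃ t : S, (∃ x : X, A.Reaches (A.step t x).2 t) ∧ A.Reaches t s }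

/-- The circuit part `C(A)` as a subautomaton. -/
def circuitPart (A : Mealy S X) : Mealy A.circuitStates X where
  step s x :=
    ((A.step s.1 x).1,
      ⟨(A.step s.1 x).2, by
        obtain ⟨t, hc, hr⟩ := s.2
        exact ⟨t, hc, hr.tail ⟨x, rfl⟩⟩⟩)

/-- The subautomaton induced on a subset of states closed under transitions. -/
def subautomaton (A : Mealy S X) (T : Set S)
    (hT : ∀ s ∈ T, ∀ x : X, (A.step s x).2 ∈ T) : Mealy T X where
  step s x := ((A.step s.1 x).1, ⟨(A.step s.1 x).2, hT s.1 s.2 x⟩)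

/-- The extension of a length- and prefix-preserving map on finite words to
right-infinite sequences (letter by letter). -/
def extOmega (f : List X → List X) (w : ℕ → X) : ℕ → X :=
  fun n => (f ((List.range (n + 1)).map w)).getD n (w n)

/-- The orbit of a right-infinite sequence under the automaton group. -/
def orbitOmega (A : Mealy S X) (w : ℕ → X) : Set (ℕ → X) :=
  { w' | ∃ g ∈ A.autGroup, w' = extOmega (⇑(g : Equiv.Perm (List X))) w }

/-- The group `G_A` is level-transitive if it acts transitively on each level `X^n`. -/
def LevelTransitive (A : Mealy S X) : Prop :=
  ∀ v u : List X, v.length = u.length → ∃ g ∈ A.autGroup, g v = u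

end Mealy

/-- The run of a deterministic finite-state machine on a right-infinite input:
`dfaRun δ q₀ w n` is the state after reading the first `n` letters. -/
def dfaRun {Q X : Type*} (δ : Q → X → Q) (q₀ : Q) (w : ℕ → X) : ℕ → Q
  | 0 => q₀
  | n + 1 => δ (dfaRun δ q₀ w n) (w n)

/-- A concrete encoding of an invertible Mealy automaton (with state set `Fin n`
over alphabet `Fin k`) as a natural number. -/
def encodeAut (n k : ℕ) (step : Fin n → Fin k → Fin k × Fin n) : ℕ :=
  Nat.pair n (Nat.pair k (Encodable.encode
    ((List.finRange n).flatMap fun s =>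
      (List.finRange k).map fun x =>
        Nat.pair ((step s x).1 : ℕ) ((step s x).2 : ℕ))))

/-!
An `s`-edge `v → s(v)` of the orbit is an `e`-edge as soon as `s|_v` is trivial. Otherwise, since
every state has a predecessor, the path reading `v` from `s` is the end of a left-infinite path
ending at the non-trivial state `s|_v`, so both `v` and `s(v)` are post-critical. Walking along the
generators from `v` to `w ∈ O(v)`, either all edges are `e`-edges and `w ∈ O^e(v)`, or `w ∈ O^e(u)`
where `u` is the post-critical word at the head of the last edge that is not an `e`-edge.
-/

namespace Mealy

section Words

variable {S X : Type*} (A : Mealy S X)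

theorem sec_append (s : S) (v w : List X) : A.sec s (v ++ w) = A.sec (A.sec s v) w := by
  induction v generalizing s with
  | nil => rfl
  | cons _ _ ih => exact ih _

theorem act_append (s : S) (v w : List X) :
    A.act s (v ++ w) = A.act s v ++ A.act (A.sec s v) w := by
  induction v generalizing s with
  | nil => rfl
  | cons _ _ ih => exact congrArg (List.cons _) (ih _)

theorem length_act (s : S) (v : List X) : (A.act s v).length = v.length := by
  induction v generalizing s with
  | nil => rfl
  | cons _ _ ih => exact congrArg Nat.succ (ih _)

variable {A}

theorem Invertible.act_injective (hInv : A.Invertible) (s : S) :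
    Function.Injective (A.act s) := by
  intro v w h
  induction v generalizing s w with
  | nil => cases w with
    | nil => rfl
    | cons y w => cases h
  | cons x v ih => cases w with
    | nil => cases h
    | cons y w =>
      obtain ⟨hxy, hvw⟩ := List.cons.inj h
      obtain rfl : x = y := (hInv s).injective hxy
      rw [ih _ hvw]

theorem Invertible.act_surjective (hInv : A.Invertible) (s : S) :
    Function.Surjective (A.act s) := by
  intro w
  induction w generalizing s with
  | nil => exact ⟨[], rfl⟩
  | cons y w ih =>
    obtain ⟨x, hx⟩ := (hInv s).surjective y
    obtain ⟨v, hv⟩ := ih (A.step s x).2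
    exact ⟨x :: v, congrArg₂ List.cons hx hv⟩

end Words

section PostCritical

variable {S X : Type*} {A : Mealy S X}

/-- The left-infinite sequence `…p₂p₁a` obtained by appending `a` at the right end of `…p₂p₁`;
in the encoding of left-infinite sequences by `ℕ`, the new letter has index `0`. -/
def lsnoc {α : Type*} (p : ℕ → α) (a : α) : ℕ → α
  | 0 => a
  | n + 1 => p n

theorem lsuffix_succ_lsnoc (p : ℕ → X) (x : X) (n : ℕ) :
    lsuffix (lsnoc p x) (n + 1) = lsuffix p n ++ [x] := by
  simp [lsuffix, List.range_succ_eq_map, lsnoc, Function.comp_def]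

/-- Left-infinite directed paths of `A`, used to produce post-critical sequences. The path
`⋯ → σ 2 → σ 1 → σ 0` ends at `σ 0`, and its edge `σ (n + 1) → σ n` has input label `inp n` and
output label `out n`. -/
def IsLeftInfinitePath (A : Mealy S X) (σ : ℕ → S) (inp out : ℕ → X) : Prop :=
  ∀ n, A.step (σ (n + 1)) (inp n) = (out n, σ n)

theorem exists_step_eq_of_mem_circuitStates (A : Mealy S X) {s : S} (hs : s ∈ A.circuitStates) :
    ∃ t x, (A.step t x).2 = s := by
  obtain ⟨t, ⟨x, hcycle⟩, hts⟩ := hs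
  obtain ⟨r, -, hr⟩ := Relation.TransGen.tail'_iff.mp
    (Relation.TransGen.head' ⟨x, rfl⟩ (hcycle.trans hts))
  exact ⟨r, hr⟩

theorem exists_isLeftInfinitePath (hpred : ∀ s, ∃ t x, (A.step t x).2 = s) (s : S) :
    ∃ σ inp out, A.IsLeftInfinitePath σ inp out ∧ σ 0 = s := by
  choose pred letter hstep using hpred
  refine ⟨fun n => pred^[n] s, fun n => letter (pred^[n] s),
    fun n => (A.step (pred^[n + 1] s) (letter (pred^[n] s))).1, fun n => Prod.ext rfl ?_, rfl⟩
  simp only [Function.iterate_succ_apply', hstep]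

theorem IsLeftInfinitePath.lsnoc {σ : ℕ → S} {inp out : ℕ → X}
    (h : A.IsLeftInfinitePath σ inp out) (x : X) :
    A.IsLeftInfinitePath (lsnoc σ (A.step (σ 0) x).2) (lsnoc inp x)
      (lsnoc out (A.step (σ 0) x).1)
  | 0 => rfl
  | n + 1 => h n

theorem IsLeftInfinitePath.exists_append {σ : ℕ → S} {inp out : ℕ → X}
    (h : A.IsLeftInfinitePath σ inp out) (v : List X) :
    ∃ σ' inp' out', A.IsLeftInfinitePath σ' inp' out' ∧ σ' 0 = A.sec (σ 0) v ∧
      v = lsuffix inp' v.length ∧ A.act (σ 0) v = lsuffix out' v.length := by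
  induction v using List.reverseRecOn with
  | nil => exact ⟨σ, inp, out, h, rfl, rfl, rfl⟩
  | append_singleton v x ih =>
    obtain ⟨σ', inp', out', h', hend, hinp, hout⟩ := ih
    refine ⟨_, _, _, h'.lsnoc x, ?_, ?_, ?_⟩
    · rw [sec_append, ← hend]
      rfl
    · rw [List.length_append, List.length_singleton, lsuffix_succ_lsnoc, ← hinp]
    · rw [List.length_append, List.length_singleton, lsuffix_succ_lsnoc, ← hout, act_append, hend]
      rfl

theorem isPostCriticalWord_of_not_isTrivialState_sec
    (hpred : ∀ s, ∃ t x, (A.step t x).2 = s) {s : S} {v : List X}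
    (hsec : ¬A.IsTrivialState (A.sec s v)) :
    A.IsPostCriticalWord v ∧ A.IsPostCriticalWord (A.act s v) := by
  obtain ⟨σ₀, inp₀, out₀, h₀, rfl⟩ := exists_isLeftInfinitePath hpred s
  obtain ⟨σ, inp, out, h, hend, hinp, hout⟩ := h₀.exists_append v
  rw [← hend] at hsec
  refine ⟨⟨inp, ⟨σ, inp, out, h, hsec, .inl rfl⟩, hinp⟩,
    ⟨out, ⟨σ, inp, out, h, hsec, .inr rfl⟩, ?_⟩⟩
  rwa [length_act]

theorem eEquiv_act_or_isPostCriticalWord (hpred : ∀ s, ∃ t x, (A.step t x).2 = s)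
    (s : S) (v : List X) :
    A.EEquiv v (A.act s v) ∨ A.IsPostCriticalWord v ∧ A.IsPostCriticalWord (A.act s v) :=
  (em (A.IsTrivialState (A.sec s v))).imp
    (fun hsec => .rel _ _ ⟨s, .inl ⟨hsec, rfl⟩⟩)
    (isPostCriticalWord_of_not_isTrivialState_sec hpred)

end PostCritical

section Orbits

variable {S X : Type*} {A : Mealy S X}

theorem orbit_eq_mulAction_orbit (A : Mealy S X) (v : List X) :
    A.orbit v = MulAction.orbit A.autGroup v := by
  ext u
  simp only [orbit, Set.mem_ofPred_eq, MulAction.mem_orbit_iff, Subtype.exists, Subgroup.mk_smul,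
    Equiv.Perm.smul_def, exists_prop]

theorem orbit_eq_iff {u v : List X} : A.orbit u = A.orbit v ↔ u ∈ A.orbit v := by
  simp only [orbit_eq_mulAction_orbit, MulAction.orbit_eq_iff]

theorem Invertible.act_mem_orbit (hInv : A.Invertible) (s : S) (v : List X) :
    A.act s v ∈ A.orbit v :=
  ⟨.ofBijective _ ⟨hInv.act_injective s, hInv.act_surjective s⟩,
    Subgroup.subset_closure ⟨s, fun _ => rfl⟩, rfl⟩

theorem Invertible.orbit_eq_of_eRel (hInv : A.Invertible) {v u : List X} (h : A.ERel v u) :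
    A.orbit v = A.orbit u := by
  obtain ⟨s, ⟨-, rfl⟩ | ⟨-, rfl⟩⟩ := h
  · exact (orbit_eq_iff.mpr (hInv.act_mem_orbit s v)).symm
  · exact orbit_eq_iff.mpr (hInv.act_mem_orbit s u)

theorem Invertible.eOrbit_subset_orbit (hInv : A.Invertible) (v : List X) :
    A.eOrbit v ⊆ A.orbit v := by
  intro u hu
  have horbit : A.orbit v = A.orbit u :=
    (Setoid.ker A.orbit).iseqv.eqvGen_iff.mp (hu.mono fun _ _ => hInv.orbit_eq_of_eRel)
  exact orbit_eq_iff.mp horbit.symm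

theorem mem_orbit_self (A : Mealy S X) (v : List X) : v ∈ A.orbit v :=
  orbit_eq_iff.mp rfl

@[elab_as_elim]
theorem orbit_induction {v : List X} {motive : ∀ w, w ∈ A.orbit v → Prop}
    (base : motive v (mem_orbit_self A v))
    (step : ∀ s w w' (hw : w ∈ A.orbit v) (hw' : w' ∈ A.orbit v),
      (A.act s w = w' ∨ A.act s w' = w) → motive w hw → motive w' hw')
    {w : List X} (hw : w ∈ A.orbit v) : motive w hw := by
  obtain ⟨g, hg, rfl⟩ := hw
  induction hg using Subgroup.closure_induction_left with
  | one => exact base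
  | mul_left f hf g hg ih =>
    obtain ⟨s, hs⟩ := id hf
    exact step s (g v) _ ⟨g, hg, rfl⟩ ⟨f * g, mul_mem (Subgroup.subset_closure hf) hg, rfl⟩
      (.inl (hs _).symm) ih
  | inv_mul_cancel f hf g hg ih =>
    obtain ⟨s, hs⟩ := id hf
    refine step s (g v) _ ⟨g, hg, rfl⟩
      ⟨f⁻¹ * g, mul_mem (inv_mem (Subgroup.subset_closure hf)) hg, rfl⟩ (.inr ?_) ih
    rw [← hs, ← Equiv.Perm.mul_apply, mul_inv_cancel_left]

theorem orbit_subset_union_eOrbits (hpred : ∀ s, ∃ t x, (A.step t x).2 = s) (v : List X) :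
    A.orbit v ⊆
      A.eOrbit v ∪ ⋃ u ∈ { u | u ∈ A.orbit v ∧ A.IsPostCriticalWord u }, A.eOrbit u := by
  intro w hw
  induction hw using orbit_induction with
  | base => exact .inl (.refl v)
  | step s w w' _ hw' hact ih =>
    have hedge : A.EEquiv w w' ∨ A.IsPostCriticalWord w' := by
      rcases hact with rfl | rfl
      · exact (eEquiv_act_or_isPostCriticalWord hpred s w).imp_right And.right
      · exact (eEquiv_act_or_isPostCriticalWord hpred s w').imp (.symm _ _) And.left
    rcases hedge with hww' | hpc
    · refine ih.imp (fun hvw => hvw.trans _ _ _ hww') fun hmem => ?_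
      obtain ⟨u, hu, huw⟩ := Set.mem_iUnion₂.mp hmem
      exact Set.mem_biUnion hu (huw.trans _ _ _ hww')
    · exact .inr (Set.mem_biUnion ⟨hw', hpc⟩ (.refl w'))

end Orbits

end Mealy

theorem orbit_eq_union_eOrbits_general {S X : Type*} (A : Mealy S X) (hInv : A.Invertible)
    (hpred : ∀ s, ∃ t x, (A.step t x).2 = s) (v : List X) :
    A.orbit v =
      A.eOrbit v ∪ ⋃ u ∈ { u | u ∈ A.orbit v ∧ A.IsPostCriticalWord u }, A.eOrbit u := by
  refine (Mealy.orbit_subset_union_eOrbits hpred v).antisymm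
    (Set.union_subset (hInv.eOrbit_subset_orbit v) (Set.iUnion₂_subset ?_))
  rintro u ⟨hu, -⟩
  exact (hInv.eOrbit_subset_orbit u).trans (Mealy.orbit_eq_iff.mpr hu).subset

/-- For a bounded invertible automaton with `A = C(A)`, the orbit `O(v)`
is the union of `O^e(v)` and the `e`-orbits `O^e(u)` over all post-critical words
`u ∈ O(v)`. -/
theorem orbit_eq_union_eOrbits {S X : Type*} [Fintype S] [Fintype X]
    (hX : 2 ≤ Fintype.card X) (A : Mealy S X) (hInv : A.Invertible)
    (hBdd : A.Bounded) (hCA : ∀ s : S, s ∈ A.circuitStates) (v : List X) :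
    A.orbit v =
      A.eOrbit v ∪ ⋃ u ∈ { u | u ∈ A.orbit v ∧ A.IsPostCriticalWord u }, A.eOrbit u :=
  orbit_eq_union_eOrbits_general A hInv (fun s => A.exists_step_eq_of_mem_circuitStates (hCA s)) v
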